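/- arXiv:1311.4836 — 3 statements merged into one kernel-verified Lean document; each statement's English description precedes it below -/
import Mathlib

section
/- For every integer v ≥ 1 there exists a polynomial Q ∈ ℚ[X] of degree exactly ⌊log₂ v⌋ such that for every integer d ≥ 1, the number of (d+1)-pyramids of volume v equals Q(d). In particular the number of (d+1)-pyramids of volume v is, as a function of d, a polynomial of degree ⌊log₂ v⌋. -/
/-!
A pyramid of height `h` in dimension `d + 1` is the same thing as a `d`-tuple of *profiles*, one per
coordinate: nested chains `[lo 0, hi 0] ⊇ [lo 1, hi 1] ⊇ ⋯` of `h` integer intervals with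
`lo 0 = 0` (`isPyramidD_build`, `exists_profiles`). Its volume is `∑ a, ∏ i, width (c i) a`, where
`c i` is the `i`-th profile (`card_build`).

The constant profile `[0, 0]` has width `1` everywhere, so it does not affect the volume. Choosing
which `k` of the `d` coordinates carry another profile shows that the number of pyramids of volume
`v` is `∑ k, (d choose k) * N k`, where `N k` counts `k`-tuples of nontrivial profiles of
volume `v`. This is the binomial expansion of the `d`-th power of `1 + ∑ c, [width c]` in a monoid
algebra, the sum running over nontrivial profiles (`count_eq_sum_choose`).

A nontrivial profile has width at least `2` at level `0`, so `N k = 0` unless `2 ^ k ≤ v`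
(`nontrivialCount_eq_zero`). At `k = Nat.log 2 v` a tower of `v - 2 ^ k` unit cells on
the base `{0, 1} ^ k` shows `N k > 0` (`nontrivialCount_pos`). The sum is therefore a polynomial
in `d` of degree exactly `Nat.log 2 v`.
-/


/-- The `a`-th horizontal slice of a finite set of cells in `ℕ × ℤ^d`. -/
def polySliceD {d : ℕ} (P : Finset (ℕ × (Fin d → ℤ))) (a : ℕ) : Finset (Fin d → ℤ) :=
  (P.filter fun q => q.1 = a).image fun q => q.2

/-- A `d`-plateau: the product of `d` nonempty finite integer intervals. -/
def IsPlateauD {d : ℕ} (S : Finset (Fin d → ℤ)) : Prop :=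
  ∃ lo hi : Fin d → ℤ, (∀ i, lo i ≤ hi i) ∧
    S = Fintype.piFinset fun i => Finset.Icc (lo i) (hi i)

/-- A `(d+1)`-pyramid of height `h`. -/
def IsPyramidD (d h : ℕ) (P : Finset (ℕ × (Fin d → ℤ))) : Prop :=
  (∀ a : ℕ, (polySliceD P a).Nonempty ↔ a < h) ∧
  (∀ a : ℕ, a < h → IsPlateauD (polySliceD P a)) ∧
  (∀ (a : ℕ) (y : Fin d → ℤ), (a + 1, y) ∈ P → (a, y) ∈ P) ∧
  (∀ y : Fin d → ℤ, ((0 : ℕ), y) ∈ P → ∀ i, 0 ≤ y i) ∧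
  ((0 : ℕ), fun _ : Fin d => (0 : ℤ)) ∈ P

/-- A `(d+1)`-pyramid (of some height `h ≥ 1`). -/
def IsDPyramid (d : ℕ) (P : Finset (ℕ × (Fin d → ℤ))) : Prop :=
  ∃ h : ℕ, 1 ≤ h ∧ IsPyramidD d h P

/-- A `(d+1)`-espalier: a `(d+1)`-pyramid all of whose plateaus contain the origin. -/
def IsDEspalier (d : ℕ) (P : Finset (ℕ × (Fin d → ℤ))) : Prop :=
  ∃ h : ℕ, 1 ≤ h ∧ IsPyramidD d h P ∧
    ∀ a : ℕ, a < h → (a, fun _ : Fin d => (0 : ℤ)) ∈ P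

open Finset

/-! ### Binomial expansion of the counting problem -/

/-- Tuples over `C` satisfying a condition on the product of their weights can be counted by
first choosing the positions not occupied by an element `t` of weight `1`. -/
lemma count_eq_sum_choose {α M : Type*} [DecidableEq α] [CommMonoid M] (C : Finset α) (t : α)
    (ht : t ∈ C) (w : α → M) (hw : w t = 1) (p : M → Prop) [DecidablePred p] (d : ℕ) :
    #{f ∈ Fintype.piFinset (fun _ : Fin d => C) | p (∏ i, w (f i))} =
      ∑ k ∈ range (d + 1), d.choose k *
        #{f ∈ Fintype.piFinset (fun _ : Fin k => C.erase t) | p (∏ i, w (f i))} := by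
  classical
  -- The additive functional summing the coefficients of the monomials that satisfy `p`.
  let L : MonoidAlgebra ℕ M →+ ℕ :=
    MonoidAlgebra.liftNC (AddMonoidHom.id ℕ) (fun m => if p m then 1 else 0)
  have hL : ∀ m, L (MonoidAlgebra.of ℕ M m) = if p m then 1 else 0 := by
    intro m
    simp [L, MonoidAlgebra.liftNC_single]
  have key : ∀ (n : ℕ) (D : Finset α),
      L ((∑ c ∈ D, MonoidAlgebra.of ℕ M (w c)) ^ n) =
        #{f ∈ Fintype.piFinset (fun _ : Fin n => D) | p (∏ i, w (f i))} := by
    intro n D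
    rw [Finset.sum_pow', map_sum, Finset.card_filter]
    refine Finset.sum_congr rfl fun f _ => ?_
    rw [← map_prod, hL]
  rw [← key, ← Finset.sum_erase_add _ _ ht, hw, map_one, add_pow, map_sum]
  refine Finset.sum_congr rfl fun k _ => ?_
  rw [one_pow, mul_one, mul_comm, ← nsmul_eq_mul, map_nsmul, key, smul_eq_mul]

/-! ### Profiles -/

/-- A profile of height `h`: a nested chain of `h` nonempty integer intervals
`[(c a).1, (c a).2]` whose largest member starts at `0`. This is the trace of a pyramid on one
coordinate. -/
def IsProfile {h : ℕ} (c : Fin h → ℤ × ℤ) : Prop :=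
  (∀ a b, a ≤ b → (c a).1 ≤ (c b).1 ∧ (c b).1 ≤ (c b).2 ∧ (c b).2 ≤ (c a).2) ∧
    ∀ a : Fin h, a.val = 0 → (c a).1 = 0

open Classical in
/-- The finite set of profiles of height `h` with all endpoints in `[0, v]`. Every coordinate of a
pyramid of volume `v` satisfies this bound. -/
noncomputable def profiles (h v : ℕ) : Finset (Fin h → ℤ × ℤ) :=
  {c ∈ Fintype.piFinset fun _ : Fin h => Icc (0 : ℤ) v ×ˢ Icc (0 : ℤ) v | IsProfile c}

lemma mem_profiles {h v : ℕ} {c : Fin h → ℤ × ℤ} :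
    c ∈ profiles h v ↔
      (∀ a, (0 ≤ (c a).1 ∧ (c a).1 ≤ v) ∧ (0 ≤ (c a).2 ∧ (c a).2 ≤ v)) ∧ IsProfile c := by
  simp [profiles]

/-- The number of integers in each interval of a chain. -/
def width {h : ℕ} (c : Fin h → ℤ × ℤ) (a : Fin h) : ℕ := ((c a).2 + 1 - (c a).1).toNat

/-- The volume of the pyramid with profiles `f`. -/
def volumeOf {h d : ℕ} (f : Fin d → Fin h → ℤ × ℤ) : ℕ := ∑ a, ∏ i, width (f i) a

/-- The constant chain `[0, 0]`. -/
def trivialProfile (h : ℕ) : Fin h → ℤ × ℤ := fun _ => (0, 0)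

lemma trivialProfile_mem (h v : ℕ) : trivialProfile h ∈ profiles h v := by
  simp [mem_profiles, trivialProfile, IsProfile]

/-- The number of `k`-tuples of nontrivial profiles of height `h` with volume `v`. -/
noncomputable def nontrivialCount (h v k : ℕ) : ℕ :=
  #{f ∈ Fintype.piFinset (fun _ : Fin k => (profiles h v).erase (trivialProfile h)) |
    volumeOf f = v}

/-- The finite set of `d`-tuples of profiles of height `h` with volume `v`. -/
noncomputable def profileTuples (d h v : ℕ) : Finset (Fin d → Fin h → ℤ × ℤ) :=
  {f ∈ Fintype.piFinset (fun _ : Fin d => profiles h v) | volumeOf f = v}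

lemma card_profileTuples (d h v : ℕ) :
    #(profileTuples d h v) = ∑ k ∈ range (d + 1), d.choose k * nontrivialCount h v k := by
  have hvol : ∀ (n : ℕ) (D : Finset (Fin h → ℤ × ℤ)),
      #{f ∈ Fintype.piFinset (fun _ : Fin n => D) | volumeOf f = v} =
        #{f ∈ Fintype.piFinset (fun _ : Fin n => D) | ∑ a, (∏ i, width (f i)) a = v} :=
    fun n D => congrArg Finset.card
      (Finset.filter_congr fun f _ => by simp only [volumeOf, Finset.prod_apply])
  simp only [profileTuples, nontrivialCount, hvol]
  exact count_eq_sum_choose (profiles h v) (trivialProfile h) (trivialProfile_mem h v)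
    (width (h := h)) (by ext a; simp [width, trivialProfile]) (fun m => ∑ a, m a = v) d

lemma one_le_width {h : ℕ} {c : Fin h → ℤ × ℤ} (hc : IsProfile c) (a : Fin h) :
    1 ≤ width c a := by
  have := (hc.1 a a le_rfl).2.1
  unfold width
  omega

/-- A profile whose largest interval is a point is trivial, by nestedness. -/
lemma two_le_width {h : ℕ} {c : Fin h → ℤ × ℤ} (hc : IsProfile c) (hh : 0 < h)
    (hne : c ≠ trivialProfile h) : 2 ≤ width c ⟨0, hh⟩ := by
  by_contra hlt
  apply hne
  funext a
  have h0 := hc.2 ⟨0, hh⟩ rfl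
  have h1 := hc.1 ⟨0, hh⟩ a (Nat.zero_le _)
  unfold width at hlt
  ext <;> simp only [trivialProfile] <;> omega

lemma nontrivialCount_eq_zero {h v k : ℕ} (hh : 0 < h) (hk : v < 2 ^ k) :
    nontrivialCount h v k = 0 := by
  classical
  rw [nontrivialCount, Finset.card_eq_zero, Finset.filter_eq_empty_iff]
  intro f hf hvol
  rw [Fintype.mem_piFinset] at hf
  have h1 : ∏ _i : Fin k, 2 ≤ ∏ i, width (f i) ⟨0, hh⟩ := by
    refine Finset.prod_le_prod' fun i _ => ?_
    have := Finset.mem_erase.1 (hf i)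
    exact two_le_width (mem_profiles.1 this.2).2 hh this.1
  have h2 : ∏ i, width (f i) ⟨0, hh⟩ ≤ volumeOf f :=
    Finset.single_le_sum (f := fun a => ∏ i, width (f i) a) (fun _ _ => Nat.zero_le _)
      (Finset.mem_univ _)
  simp at h1
  omega

lemma nontrivialCount_pos {v k : ℕ} (hv : 2 ^ k ≤ v) :
    0 < nontrivialCount (v - 2 ^ k + 1) v k := by
  classical
  have hpos : 0 < 2 ^ k := by positivity
  rw [nontrivialCount, Finset.card_pos]
  -- All coordinates have the profile `[0, 1] ⊇ [0, 0] ⊇ [0, 0] ⊇ ⋯`.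
  refine ⟨fun _ a => (0, if a = 0 then 1 else 0), ?_⟩
  rw [Finset.mem_filter, Fintype.mem_piFinset]
  refine ⟨fun _ => Finset.mem_erase.2 ⟨fun h => ?_, mem_profiles.2 ⟨fun a => ?_, ?_, ?_⟩⟩, ?_⟩
  · have := congrFun h 0
    simp [trivialProfile] at this
  · dsimp only
    split_ifs <;> omega
  · intro a b hab
    dsimp only
    have : b = 0 → a = 0 := by
      rintro rfl
      exact Fin.le_zero_iff.1 hab
    split_ifs <;> simp_all
  · simp
  · rw [volumeOf, Fin.sum_univ_succ]
    simp [width, Fin.succ_ne_zero]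
    omega

/-! ### Pyramids as tuples of profiles -/

/-- The set of cells whose slice at each level `a < h` is the box `∏ i, [(f i a).1, (f i a).2]`. -/
noncomputable def build {d h : ℕ} (f : Fin d → Fin h → ℤ × ℤ) : Finset (ℕ × (Fin d → ℤ)) :=
  (univ : Finset (Fin h)).biUnion fun a =>
    (Fintype.piFinset fun i => Icc (f i a).1 (f i a).2).map
      ⟨Prod.mk a.val, Prod.mk_right_injective _⟩

lemma mem_build {d h : ℕ} {f : Fin d → Fin h → ℤ × ℤ} {a : ℕ} {y : Fin d → ℤ} :
    (a, y) ∈ build f ↔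
      ∃ ha : a < h, ∀ i, (f i ⟨a, ha⟩).1 ≤ y i ∧ y i ≤ (f i ⟨a, ha⟩).2 := by
  simp only [build, mem_biUnion, mem_univ, true_and, mem_map, Fintype.mem_piFinset, mem_Icc,
    Function.Embedding.coeFn_mk, Prod.mk.injEq]
  constructor
  · rintro ⟨b, z, hz, rfl, rfl⟩
    exact ⟨b.2, hz⟩
  · rintro ⟨ha, hy⟩
    exact ⟨⟨a, ha⟩, y, hy, rfl, rfl⟩

lemma card_build {d h : ℕ} (f : Fin d → Fin h → ℤ × ℤ) : #(build f) = volumeOf f := by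
  rw [build, Finset.card_biUnion]
  · simp [volumeOf, width, Fintype.card_piFinset, Int.card_Icc]
  · intro a _ b _ hab
    rw [Function.onFun, Finset.disjoint_left]
    intro x hx hx'
    simp only [mem_map, Function.Embedding.coeFn_mk] at hx hx'
    obtain ⟨y, -, rfl⟩ := hx
    obtain ⟨z, -, hz⟩ := hx'
    exact hab (Fin.ext (congrArg Prod.fst hz).symm)

lemma mem_polySliceD {d : ℕ} {P : Finset (ℕ × (Fin d → ℤ))} {a : ℕ} {y : Fin d → ℤ} :
    y ∈ polySliceD P a ↔ (a, y) ∈ P := by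
  simp [polySliceD]

/-- Each level of `build f` contains the lower and the upper corner of its box. -/
lemma corners_mem_build {d h : ℕ} {f : Fin d → Fin h → ℤ × ℤ} (hf : ∀ i, IsProfile (f i))
    (a : Fin h) : (a.val, fun i => (f i a).1) ∈ build f ∧ (a.val, fun i => (f i a).2) ∈ build f :=
  ⟨mem_build.2 ⟨a.2, fun i => ⟨le_rfl, ((hf i).1 a a le_rfl).2.1⟩⟩,
    mem_build.2 ⟨a.2, fun i => ⟨((hf i).1 a a le_rfl).2.1, le_rfl⟩⟩⟩

lemma isPyramidD_build {d h : ℕ} (hh : 0 < h) {f : Fin d → Fin h → ℤ × ℤ}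
    (hf : ∀ i, IsProfile (f i)) : IsPyramidD d h (build f) := by
  refine ⟨fun a => ⟨?_, fun ha => ?_⟩, fun a ha => ?_, fun a y hy => ?_, fun y hy i => ?_, ?_⟩
  · rintro ⟨y, hy⟩
    exact (mem_build.1 (mem_polySliceD.1 hy)).1
  · exact ⟨_, mem_polySliceD.2 (corners_mem_build hf ⟨a, ha⟩).1⟩
  · refine ⟨fun i => (f i ⟨a, ha⟩).1, fun i => (f i ⟨a, ha⟩).2,
      fun i => ((hf i).1 _ _ le_rfl).2.1, ?_⟩
    ext y
    simp [mem_polySliceD, mem_build, ha]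
  · obtain ⟨ha, hy⟩ := mem_build.1 hy
    refine mem_build.2 ⟨by omega, fun i => ?_⟩
    have h1 := (hf i).1 ⟨a, by omega⟩ ⟨a + 1, ha⟩ (Nat.le_succ a)
    have h2 := hy i
    omega
  · obtain ⟨h0, hy⟩ := mem_build.1 hy
    have h1 := (hf i).2 ⟨0, h0⟩ rfl
    have h2 := hy i
    omega
  · refine mem_build.2 ⟨hh, fun i => ?_⟩
    have h1 := (hf i).2 ⟨0, hh⟩ rfl
    have h2 := (hf i).1 ⟨0, hh⟩ ⟨0, hh⟩ le_rfl
    omega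

lemma exists_profiles {d h : ℕ} {P : Finset (ℕ × (Fin d → ℤ))} (hP : IsPyramidD d h P) :
    ∃ f : Fin d → Fin h → ℤ × ℤ, (∀ i, IsProfile (f i)) ∧ build f = P := by
  obtain ⟨hne, hplat, hdown, hpos, horig⟩ := hP
  choose lo hi hle hbox using fun a : Fin h => hplat a.1 a.2
  have hmem : ∀ (a : Fin h) (y : Fin d → ℤ),
      (a.val, y) ∈ P ↔ ∀ i, lo a i ≤ y i ∧ y i ≤ hi a i := by
    intro a y
    rw [← mem_polySliceD, hbox a]
    simp
  have hanti : ∀ (a b : ℕ), a ≤ b → ∀ y, (b, y) ∈ P → (a, y) ∈ P := by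
    intro a b hab
    induction b, hab using Nat.le_induction with
    | base => exact fun y hy => hy
    | succ b _ ih => exact fun y hy => ih y (hdown b y hy)
  refine ⟨fun i a => (lo a i, hi a i), fun i => ⟨fun a b hab => ?_, fun a ha => ?_⟩, ?_⟩
  · -- Both corners of level `b` lie in the box of level `a`.
    have h1 := (hmem a _).1 (hanti a b hab _ ((hmem b (lo b)).2 fun i => ⟨le_rfl, hle b i⟩)) i
    have h2 := (hmem a _).1 (hanti a b hab _ ((hmem b (hi b)).2 fun i => ⟨hle b i, le_rfl⟩)) i
    exact ⟨h1.1, hle b i, h2.2⟩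
  · have h1 := (hmem a (lo a)).2 fun i => ⟨le_rfl, hle a i⟩
    have h2 := hmem a (fun _ => 0)
    rw [ha] at h1 h2
    exact le_antisymm ((h2.1 horig) i).1 (hpos _ h1 i)
  · ext ⟨a, y⟩
    rw [mem_build]
    constructor
    · rintro ⟨ha, hy⟩
      exact (hmem ⟨a, ha⟩ y).2 hy
    · intro hy
      have ha : a < h := (hne a).1 ⟨y, mem_polySliceD.2 hy⟩
      exact ⟨ha, (hmem ⟨a, ha⟩ y).1 hy⟩

lemma build_injective {d h : ℕ} {f g : Fin d → Fin h → ℤ × ℤ} (hf : ∀ i, IsProfile (f i))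
    (hg : ∀ i, IsProfile (g i)) (hfg : build f = build g) : f = g := by
  funext i a
  have h1 := corners_mem_build hf a
  have h2 := corners_mem_build hg a
  rw [hfg] at h1
  rw [← hfg] at h2
  have e1 := (mem_build.1 h1.1).2 i
  have e2 := (mem_build.1 h1.2).2 i
  have e3 := (mem_build.1 h2.1).2 i
  have e4 := (mem_build.1 h2.2).2 i
  simp only [Fin.eta] at e1 e2 e3 e4
  ext <;> omega

lemma height_unique {d h h' : ℕ} {P : Finset (ℕ × (Fin d → ℤ))} (hP : IsPyramidD d h P)
    (hP' : IsPyramidD d h' P) : h = h' := by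
  have key : ∀ a, a < h ↔ a < h' := fun a => (hP.1 a).symm.trans (hP'.1 a)
  have h1 := key h
  have h2 := key h'
  omega

/-- The endpoint and height bounds satisfied by a pyramid of volume `v`. -/
lemma bounds_of_volume {d h v : ℕ} (hh : 0 < h) {f : Fin d → Fin h → ℤ × ℤ}
    (hf : ∀ i, IsProfile (f i)) (hvol : volumeOf f = v) :
    h ≤ v ∧ ∀ i, f i ∈ profiles h v := by
  have hprod : ∀ a, 1 ≤ ∏ i, width (f i) a := fun a =>
    Finset.one_le_prod' fun i _ => one_le_width (hf i) a
  constructor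
  · have : ∑ _a : Fin h, 1 ≤ volumeOf f := Finset.sum_le_sum fun a _ => hprod a
    simpa [hvol] using this
  · intro i
    have h1 : width (f i) ⟨0, hh⟩ ≤ ∏ i, width (f i) ⟨0, hh⟩ :=
      Finset.single_le_prod' (f := fun i => width (f i) ⟨0, hh⟩)
        (fun j _ => one_le_width (hf j) _) (Finset.mem_univ i)
    have h2 : ∏ i, width (f i) ⟨0, hh⟩ ≤ volumeOf f :=
      Finset.single_le_sum (f := fun a => ∏ i, width (f i) a) (fun _ _ => Nat.zero_le _)
        (Finset.mem_univ _)
    refine mem_profiles.2 ⟨fun a => ?_, hf i⟩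
    have h3 := (hf i).1 ⟨0, hh⟩ a (Nat.zero_le _)
    have h4 := (hf i).2 ⟨0, hh⟩ rfl
    unfold width at h1 h2
    omega

lemma card_pyramids (d v : ℕ) :
    Nat.card {P : Finset (ℕ × (Fin d → ℤ)) // IsDPyramid d P ∧ P.card = v} =
      ∑ h ∈ Icc 1 v, #(profileTuples d h v) := by
  let T : Finset (Σ h : ℕ, Fin d → Fin h → ℤ × ℤ) := (Icc 1 v).sigma fun h => profileTuples d h v
  have hT : ∀ x ∈ T, 0 < x.1 ∧ (∀ i, IsProfile (x.2 i)) ∧ volumeOf x.2 = v := by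
    intro x hx
    rw [Finset.mem_sigma, mem_Icc, profileTuples, mem_filter, Fintype.mem_piFinset] at hx
    exact ⟨hx.1.1, fun i => (mem_profiles.1 (hx.2.1 i)).2, hx.2.2⟩
  have himage : {P : Finset (ℕ × (Fin d → ℤ)) | IsDPyramid d P ∧ P.card = v} =
      Set.image (fun x : Σ h : ℕ, Fin d → Fin h → ℤ × ℤ => build x.2) (T : Set _) := by
    ext P
    constructor
    · rintro ⟨⟨h, hh, hP⟩, hcard⟩
      obtain ⟨f, hf, rfl⟩ := exists_profiles hP
      rw [card_build] at hcard
      obtain ⟨hhv, hmem⟩ := bounds_of_volume hh hf hcard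
      refine ⟨⟨h, f⟩, ?_, rfl⟩
      rw [Finset.mem_coe, Finset.mem_sigma, mem_Icc, profileTuples, mem_filter,
        Fintype.mem_piFinset]
      exact ⟨⟨hh, hhv⟩, hmem, hcard⟩
    · rintro ⟨x, hx, rfl⟩
      obtain ⟨hh, hf, hvol⟩ := hT x hx
      exact ⟨⟨x.1, hh, isPyramidD_build hh hf⟩, (card_build _).trans hvol⟩
  have hinj : Set.InjOn (fun x : Σ h : ℕ, Fin d → Fin h → ℤ × ℤ => build x.2) (T : Set _) := by
    rintro ⟨h, f⟩ hx ⟨h', g⟩ hy hxy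
    obtain ⟨hh, hf, -⟩ := hT _ hx
    obtain ⟨hh', hg, -⟩ := hT _ hy
    dsimp only at hxy hf hg hh hh'
    have hP := isPyramidD_build hh hf
    rw [hxy] at hP
    obtain rfl := height_unique hP (isPyramidD_build hh' hg)
    rw [build_injective hf hg hxy]
  rw [← Finset.card_sigma]
  change Nat.card ({P | IsDPyramid d P ∧ P.card = v} : Set (Finset (ℕ × (Fin d → ℤ)))) = #T
  rw [Nat.card_coe_set_eq, himage, hinj.ncard_image, Set.ncard_coe_finset]

/-! ### The counting polynomial -/

/-- A combination of the binomial polynomials `X choose k`, `k ≤ L`, has degree exactly `L` if its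
last coefficient is nonzero. -/
lemma exists_binomial_polynomial (L : ℕ) (N : ℕ → ℕ) (hN : N L ≠ 0) :
    ∃ Q : Polynomial ℚ, Q ≠ 0 ∧ Q.natDegree = L ∧
      ∀ d : ℕ, Q.eval (d : ℚ) = ∑ k ∈ range (L + 1), (d.choose k * N k : ℚ) := by
  let q : ℕ → Polynomial ℚ := fun k =>
    Polynomial.C ((N k : ℚ) / k.factorial) * descPochhammer ℚ k
  have hq : ∀ k, (q k).natDegree ≤ k := fun k =>
    (Polynomial.natDegree_C_mul_le _ _).trans (descPochhammer_natDegree ℚ k).le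
  have hcoeff : (∑ k ∈ range (L + 1), q k).coeff L ≠ 0 := by
    rw [Polynomial.finsetSum_coeff, Finset.sum_range_succ, Finset.sum_eq_zero, zero_add]
    · have h1 : (descPochhammer ℚ L).coeff L = 1 := by
        have := (monic_descPochhammer ℚ L).coeff_natDegree
        rwa [descPochhammer_natDegree] at this
      rw [Polynomial.coeff_C_mul, h1, mul_one]
      exact div_ne_zero (Nat.cast_ne_zero.2 hN) (Nat.cast_ne_zero.2 L.factorial_ne_zero)
    · intro k hk
      exact Polynomial.coeff_eq_zero_of_natDegree_lt ((hq k).trans_lt (mem_range.1 hk))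
  refine ⟨∑ k ∈ range (L + 1), q k, fun h => hcoeff (by rw [h, Polynomial.coeff_zero]),
    Polynomial.natDegree_eq_of_le_of_coeff_ne_zero
      (Polynomial.natDegree_sum_le_of_forall_le _ _ fun k hk =>
        (hq k).trans (Nat.lt_succ_iff.1 (mem_range.1 hk))) hcoeff, fun d => ?_⟩
  rw [Polynomial.eval_finsetSum]
  refine Finset.sum_congr rfl fun k _ => ?_
  have hk : (k.factorial : ℚ) ≠ 0 := Nat.cast_ne_zero.2 k.factorial_ne_zero
  rw [Polynomial.eval_mul, Polynomial.eval_C, descPochhammer_eval_eq_descFactorial,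
    Nat.descFactorial_eq_factorial_mul_choose]
  push_cast
  field_simp

theorem card_pyramids_volume_polynomial_in_dim (v : ℕ) (hv : 1 ≤ v) :
    ∃ Q : Polynomial ℚ, Q ≠ 0 ∧ Q.natDegree = Nat.log 2 v ∧
      ∀ d : ℕ, 1 ≤ d →
        (Nat.card {P : Finset (ℕ × (Fin d → ℤ)) // IsDPyramid d P ∧ P.card = v} : ℚ) =
          Q.eval (d : ℚ) := by
  let N : ℕ → ℕ := fun k => ∑ h ∈ Icc 1 v, nontrivialCount h v k
  have hzero : ∀ k, Nat.log 2 v < k → N k = 0 := fun k hk =>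
    Finset.sum_eq_zero fun h hh =>
      nontrivialCount_eq_zero (mem_Icc.1 hh).1 (Nat.lt_pow_of_log_lt one_lt_two hk)
  have hpos : N (Nat.log 2 v) ≠ 0 := by
    have hle : 2 ^ Nat.log 2 v ≤ v := Nat.pow_log_le_self 2 (by omega)
    have h2 : 0 < 2 ^ Nat.log 2 v := by positivity
    have h1 : nontrivialCount (v - 2 ^ Nat.log 2 v + 1) v (Nat.log 2 v) ≤ N (Nat.log 2 v) :=
      Finset.single_le_sum (f := fun h => nontrivialCount h v (Nat.log 2 v))
        (fun _ _ => Nat.zero_le _) (mem_Icc.2 ⟨by omega, by omega⟩)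
    have h3 := nontrivialCount_pos hle
    omega
  obtain ⟨Q, hQ0, hQdeg, hQ⟩ := exists_binomial_polynomial (Nat.log 2 v) N hpos
  refine ⟨Q, hQ0, hQdeg, fun d _ => ?_⟩
  have hcount : Nat.card {P : Finset (ℕ × (Fin d → ℤ)) // IsDPyramid d P ∧ P.card = v} =
      ∑ k ∈ range (d + 1), d.choose k * N k := by
    simp only [card_pyramids, card_profileTuples, N, Finset.mul_sum]
    exact Finset.sum_comm
  -- Terms with `k > d` vanish because of the binomial, those with `k > log₂ v` because of `N`.
  have hrange : ∑ k ∈ range (d + 1), d.choose k * N k =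
      ∑ k ∈ range (Nat.log 2 v + 1), d.choose k * N k := by
    trans ∑ k ∈ range (d + Nat.log 2 v + 1), d.choose k * N k
    · refine Finset.sum_subset (by intro k; simp; omega) fun k _ hk => ?_
      rw [Nat.choose_eq_zero_of_lt (by simpa using hk), zero_mul]
    · refine (Finset.sum_subset (by intro k; simp; omega) fun k _ hk => ?_).symm
      rw [hzero k (by simpa using hk), mul_zero]
  rw [hcount, hrange, hQ]
  push_cast
  rfl
end

section
/- For every integer k ≥ 0, the sequence h ↦ n^e_{h+k, h}, where n^e_{v,h} denotes the number of espaliers of height h and volume v, is eventually constant: there exist H and C such that n^e_{h+k, h} = C for all h ≥ H. (Equivalently, the limit lim_{h → ∞} x^{−h}·𝓔^e(x; h) of the volume generating functions of espaliers of height h exists coefficientwise; it is the generating function of quasi-espaliers.) -/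
/-!
Adding the single cell `(h, 0, 0)` on top of an espalier of height `h ≥ 1` gives an espalier of
height `h + 1` with one more cell. Conversely, if an espalier of height `h + 1` has volume
`h + 1 + k` with `k ≤ h`, its top plateau is the single cell `(0, 0)`: by downward closure a second
cell there would force every one of the `h + 1` plateaus to have at least two cells, so that the
volume would be at least `2 (h + 1) > h + 1 + k`. Removing the top cell therefore inverts the
construction, and `h ↦ n^e_{h+k, h}` is constant from `h = k + 1` on.
-/

/-- The `a`-th horizontal slice of a finite set of cells in `ℕ × ℤ × ℤ`. -/
def polySlice (P : Finset (ℕ × ℤ × ℤ)) (a : ℕ) : Finset (ℤ × ℤ) :=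
  (P.filter fun q => q.1 = a).image fun q => q.2

/-- A plateau: the product of two nonempty finite integer intervals. -/
def IsPlateau (S : Finset (ℤ × ℤ)) : Prop :=
  ∃ a b c d : ℤ, a ≤ b ∧ c ≤ d ∧ S = Finset.Icc a b ×ˢ Finset.Icc c d

/-- A pyramid of height `h`. -/
def IsPyramid (h : ℕ) (P : Finset (ℕ × ℤ × ℤ)) : Prop :=
  (∀ a : ℕ, (polySlice P a).Nonempty ↔ a < h) ∧
  (∀ a : ℕ, a < h → IsPlateau (polySlice P a)) ∧
  (∀ (a : ℕ) (b c : ℤ), (a + 1, b, c) ∈ P → (a, b, c) ∈ P) ∧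
  (∀ b c : ℤ, ((0 : ℕ), b, c) ∈ P → 0 ≤ b ∧ 0 ≤ c) ∧
  ((0 : ℕ), (0 : ℤ), (0 : ℤ)) ∈ P

/-- An espalier of height `h`: a pyramid all of whose plateaus contain `(0,0)`. -/
def IsEspalier (h : ℕ) (P : Finset (ℕ × ℤ × ℤ)) : Prop :=
  IsPyramid h P ∧ ∀ a : ℕ, a < h → (a, (0 : ℤ), (0 : ℤ)) ∈ P

lemma mem_polySlice (P : Finset (ℕ × ℤ × ℤ)) (a : ℕ) (p : ℤ × ℤ) :
    p ∈ polySlice P a ↔ (a, p) ∈ P := by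
  simp [polySlice]

lemma polySlice_congr {P Q : Finset (ℕ × ℤ × ℤ)} {a : ℕ}
    (hPQ : ∀ p, (a, p) ∈ P ↔ (a, p) ∈ Q) : polySlice P a = polySlice Q a := by
  ext p
  rw [mem_polySlice, mem_polySlice, hPQ]

lemma polySlice_insert_of_ne (P : Finset (ℕ × ℤ × ℤ)) {a h : ℕ} (ha : a ≠ h) :
    polySlice (insert (h, (0 : ℤ), (0 : ℤ)) P) a = polySlice P a :=
  polySlice_congr fun p => by simp [ha]

lemma polySlice_erase_of_ne (P : Finset (ℕ × ℤ × ℤ)) {a h : ℕ} (ha : a ≠ h) :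
    polySlice (P.erase (h, (0 : ℤ), (0 : ℤ))) a = polySlice P a :=
  polySlice_congr fun p => by simp [ha]

lemma IsEspalier.lt_of_mem {h : ℕ} {P : Finset (ℕ × ℤ × ℤ)} (hP : IsEspalier h P)
    {a : ℕ} {p : ℤ × ℤ} (hp : (a, p) ∈ P) : a < h :=
  (hP.1.1 a).1 ⟨p, (mem_polySlice P a p).2 hp⟩

lemma IsEspalier.top_notMem {h : ℕ} {P : Finset (ℕ × ℤ × ℤ)} (hP : IsEspalier h P) :
    (h, (0 : ℤ), (0 : ℤ)) ∉ P :=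
  fun hm => lt_irrefl _ (hP.lt_of_mem hm)

lemma IsEspalier.mem_of_le {h : ℕ} {P : Finset (ℕ × ℤ × ℤ)} (hP : IsEspalier h P)
    {a b : ℕ} {p : ℤ × ℤ} (hab : a ≤ b) (hp : (b, p) ∈ P) : (a, p) ∈ P := by
  induction b, hab using Nat.le_induction with
  | base => exact hp
  | succ n _ ih => exact ih (hP.1.2.2.1 n p.1 p.2 hp)

lemma IsEspalier.insert_top {h : ℕ} (hh : 1 ≤ h) {P : Finset (ℕ × ℤ × ℤ)}
    (hP : IsEspalier h P) : IsEspalier (h + 1) (insert (h, (0 : ℤ), (0 : ℤ)) P) := by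
  have htop : polySlice (insert (h, (0 : ℤ), (0 : ℤ)) P) h = {(0, 0)} := by
    ext p
    have hp : (h, p) ∉ P := fun hm => lt_irrefl _ (hP.lt_of_mem hm)
    simp [mem_polySlice, hp]
  refine ⟨⟨fun a => ?_, fun a ha => ?_, fun a b c hm => ?_, fun b c hm => ?_, ?_⟩, fun a ha => ?_⟩
  · rcases eq_or_ne a h with rfl | hne
    · simp [htop]
    · rw [polySlice_insert_of_ne P hne, hP.1.1 a]
      omega
  · rcases eq_or_ne a h with rfl | hne
    · exact ⟨0, 0, 0, 0, le_rfl, le_rfl, by rw [htop]; simp⟩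
    · rw [polySlice_insert_of_ne P hne]
      exact hP.1.2.1 a (by omega)
  · rcases Finset.mem_insert.1 hm with heq | hm
    · simp only [Prod.mk.injEq] at heq
      obtain ⟨h1, rfl, rfl⟩ := heq
      exact Finset.mem_insert_of_mem (hP.2 a (by omega))
    · exact Finset.mem_insert_of_mem (hP.1.2.2.1 a b c hm)
  · rcases Finset.mem_insert.1 hm with heq | hm
    · simp only [Prod.mk.injEq] at heq
      omega
    · exact hP.1.2.2.2.1 b c hm
  · exact Finset.mem_insert_of_mem hP.1.2.2.2.2
  · rcases eq_or_ne a h with rfl | hne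
    · exact Finset.mem_insert_self _ _
    · exact Finset.mem_insert_of_mem (hP.2 a (by omega))

/-- The top plateau of an espalier of height `h + 1` with fewer than `2 (h + 1)` cells is a single
cell. -/
lemma IsEspalier.eq_zero_of_mem_top {h : ℕ} {P : Finset (ℕ × ℤ × ℤ)}
    (hP : IsEspalier (h + 1) P) (hcard : P.card < 2 * (h + 1)) {p : ℤ × ℤ}
    (hp : (h, p) ∈ P) : p = (0, 0) := by
  by_contra hne
  -- The cells above `(0, 0)` and above `p` form two disjoint columns of height `h + 1`.
  have hsub : Finset.range (h + 1) ×ˢ ({p, (0, 0)} : Finset (ℤ × ℤ)) ⊆ P := by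
    rintro ⟨a, q⟩ hq
    simp only [Finset.mem_product, Finset.mem_range, Finset.mem_insert,
      Finset.mem_singleton] at hq
    obtain ⟨ha, rfl | rfl⟩ := hq
    · exact hP.mem_of_le (by omega) hp
    · exact hP.2 a ha
  have hle := Finset.card_le_card hsub
  rw [Finset.card_product, Finset.card_range, Finset.card_pair hne] at hle
  omega

lemma IsEspalier.erase_top {h : ℕ} (hh : 1 ≤ h) {P : Finset (ℕ × ℤ × ℤ)}
    (hP : IsEspalier (h + 1) P) (hcard : P.card < 2 * (h + 1)) :
    IsEspalier h (P.erase (h, (0 : ℤ), (0 : ℤ))) := by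
  have htop : polySlice (P.erase (h, (0 : ℤ), (0 : ℤ))) h = ∅ := by
    ext p
    have hp := hP.eq_zero_of_mem_top hcard (p := p)
    simp only [mem_polySlice, Finset.mem_erase, Finset.notMem_empty, iff_false, not_and]
    intro hne hm
    exact hne (by rw [hp hm])
  refine ⟨⟨fun a => ?_, fun a ha => ?_, fun a b c hm => ?_, fun b c hm => ?_, ?_⟩, fun a ha => ?_⟩
  · rcases eq_or_ne a h with rfl | hne
    · simp [htop]
    · rw [polySlice_erase_of_ne P hne, hP.1.1 a]
      omega
  · rw [polySlice_erase_of_ne P ha.ne]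
    exact hP.1.2.1 a (by omega)
  · have hm' := Finset.mem_of_mem_erase hm
    have := hP.lt_of_mem hm'
    refine Finset.mem_erase.2 ⟨?_, hP.1.2.2.1 a b c hm'⟩
    simp only [ne_eq, Prod.mk.injEq]
    omega
  · exact hP.1.2.2.2.1 b c (Finset.mem_of_mem_erase hm)
  · refine Finset.mem_erase.2 ⟨?_, hP.1.2.2.2.2⟩
    simp only [ne_eq, Prod.mk.injEq]
    omega
  · refine Finset.mem_erase.2 ⟨?_, hP.2 a (by omega)⟩
    simp only [ne_eq, Prod.mk.injEq]
    omega

/-- Adding a top cell is a bijection from the espaliers of height `h` and volume `h + k` to those of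
height `h + 1` and volume `h + 1 + k`, as soon as `h ≥ max 1 k`. -/
def espalierSuccEquiv {h k : ℕ} (hh : 1 ≤ h) (hk : k ≤ h) :
    {P : Finset (ℕ × ℤ × ℤ) // IsEspalier h P ∧ P.card = h + k} ≃
      {P : Finset (ℕ × ℤ × ℤ) // IsEspalier (h + 1) P ∧ P.card = h + 1 + k} where
  toFun P := ⟨insert (h, (0 : ℤ), (0 : ℤ)) P.1, P.2.1.insert_top hh, by
    rw [Finset.card_insert_of_notMem P.2.1.top_notMem, P.2.2]
    omega⟩
  invFun P := ⟨P.1.erase (h, (0 : ℤ), (0 : ℤ)),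
    P.2.1.erase_top hh (by rw [P.2.2]; omega), by
      rw [Finset.card_erase_of_mem (P.2.1.2 h (Nat.lt_succ_self h)), P.2.2]
      omega⟩
  left_inv P := Subtype.ext (Finset.erase_insert P.2.1.top_notMem)
  right_inv P := Subtype.ext (Finset.insert_erase (P.2.1.2 h (Nat.lt_succ_self h)))

theorem card_espaliers_eventually_constant (k : ℕ) :
    ∃ H C : ℕ, ∀ h : ℕ, H ≤ h →
      Nat.card {P : Finset (ℕ × ℤ × ℤ) // IsEspalier h P ∧ P.card = h + k} = C := by
  refine ⟨k + 1, Nat.card {P : Finset (ℕ × ℤ × ℤ) //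
    IsEspalier (k + 1) P ∧ P.card = k + 1 + k}, fun h hh => ?_⟩
  induction h, hh using Nat.le_induction with
  | base => rfl
  | succ h hh ih =>
    rw [← ih]
    exact (Nat.card_congr (espalierSuccEquiv (by omega) (by omega))).symm
end

section
/- Let h ≥ 1 and let v_1, …, v_h be positive integers. The number of horizontally convex directed polyominoes whose rows, from bottom to top, have sizes v_1, …, v_h equals v_1 · v_2 ⋯ v_{h−1} (an empty product, equal to 1, when h = 1). -/
/-!
A horizontally convex polyomino with prescribed row sizes is determined by the left endpoints
`a_0, …, a_{h-1}` of its rows.  The leftmost cell of a row cannot be entered by an East step, so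
directedness says exactly that `a_0 = 0` and that the leftmost cell of row `y + 1` lies above a cell
of row `y`, i.e. that the shift `d_y = a_{y+1} - a_y` satisfies `0 ≤ d_y < v_y`.  Hence polyominoes
correspond bijectively to shift sequences, with `v_y` choices for every row except the top one.
`hcdOfShifts` is the map from shifts to polyominoes; `isHCD_hcdOfShifts`, `hcdOfShifts_injective`
and `exists_shifts` show that it is well defined, injective and surjective.
-/

/-- The `y`-th row of a finite set of cells in `ℤ × ℕ`. -/
def polyRow (P : Finset (ℤ × ℕ)) (y : ℕ) : Finset ℤ :=
  (P.filter fun q => q.2 = y).image fun q => q.1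

/-- One East or North step between two cells of `P`. -/
def PolyStep (P : Finset (ℤ × ℕ)) (p q : ℤ × ℕ) : Prop :=
  p ∈ P ∧ q ∈ P ∧ (q = (p.1 + 1, p.2) ∨ q = (p.1, p.2 + 1))

/-- A horizontally convex directed polyomino of height `h` with row sizes `v`. -/
def IsHCDPolyomino (h : ℕ) (v : Fin h → ℕ+) (P : Finset (ℤ × ℕ)) : Prop :=
  (∀ y : ℕ, (polyRow P y).Nonempty ↔ y < h) ∧
  (∀ y : ℕ, y < h → ∃ a b : ℤ, a ≤ b ∧ polyRow P y = Finset.Icc a b) ∧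
  (∀ y : Fin h, (polyRow P (y : ℕ)).card = (v y : ℕ)) ∧
  ((0 : ℤ), (0 : ℕ)) ∈ P ∧
  (∀ c ∈ P, Relation.ReflTransGen (PolyStep P) ((0 : ℤ), (0 : ℕ)) c)

/-- Number of admissible shifts between row `i` and the next row. The top row has no successor and
gets one dummy shift. -/
def shiftBound {h : ℕ} (v : Fin h → ℕ+) (i : Fin h) : ℕ :=
  if (i : ℕ) + 1 < h then (v i : ℕ) else 1

/-- Left endpoint of row `y`, as the sum of the shifts of the rows below it. -/
def leftEnd {h : ℕ} {n : Fin h → ℕ} (d : (i : Fin h) → Fin (n i)) (y : ℕ) : ℤ :=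
  ∑ i : Fin h, if (i : ℕ) < y then ((d i : ℕ) : ℤ) else 0

/-- The polyomino with row sizes `v` and shifts `d`. -/
noncomputable def hcdOfShifts {h : ℕ} (v : Fin h → ℕ+) (d : (i : Fin h) → Fin (shiftBound v i)) :
    Finset (ℤ × ℕ) :=
  Finset.univ.biUnion fun y : Fin h =>
    (Finset.Ico (leftEnd d y) (leftEnd d y + (v y : ℕ))).image fun x => (x, (y : ℕ))

lemma mem_polyRow {P : Finset (ℤ × ℕ)} {x : ℤ} {y : ℕ} : x ∈ polyRow P y ↔ (x, y) ∈ P := by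
  simp [polyRow]

lemma leftEnd_zero {h : ℕ} {n : Fin h → ℕ} (d : (i : Fin h) → Fin (n i)) : leftEnd d 0 = 0 := by
  simp [leftEnd]

lemma leftEnd_succ {h : ℕ} {n : Fin h → ℕ} (d : (i : Fin h) → Fin (n i)) (y : Fin h) :
    leftEnd d (y + 1) = leftEnd d y + (d y : ℕ) := by
  have key : ∀ i : Fin h, (if (i : ℕ) < y + 1 then ((d i : ℕ) : ℤ) else 0) =
      (if (i : ℕ) < y then ((d i : ℕ) : ℤ) else 0) + if i = y then ((d i : ℕ) : ℤ) else 0 := by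
    intro i
    have := @Fin.ext_iff h i y
    split_ifs <;> omega
  simp only [leftEnd, key, Finset.sum_add_distrib]
  simp

lemma mem_hcdOfShifts {h : ℕ} (v : Fin h → ℕ+) (d : (i : Fin h) → Fin (shiftBound v i))
    (y : Fin h) (x : ℤ) :
    (x, (y : ℕ)) ∈ hcdOfShifts v d ↔ leftEnd d y ≤ x ∧ x < leftEnd d y + (v y : ℕ) := by
  simp only [hcdOfShifts, Finset.mem_biUnion, Finset.mem_univ, true_and, Finset.mem_image,
    Finset.mem_Ico, Prod.mk.injEq]
  constructor
  · rintro ⟨z, x', hx, rfl, hz⟩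
    obtain rfl := Fin.ext hz
    exact hx
  · intro hx
    exact ⟨y, x, hx, rfl, rfl⟩

lemma lt_of_mem_hcdOfShifts {h : ℕ} (v : Fin h → ℕ+) (d : (i : Fin h) → Fin (shiftBound v i))
    {c : ℤ × ℕ} (hc : c ∈ hcdOfShifts v d) : c.2 < h := by
  simp only [hcdOfShifts, Finset.mem_biUnion, Finset.mem_image] at hc
  obtain ⟨z, -, x, -, rfl⟩ := hc
  exact z.2

lemma polyRow_hcdOfShifts {h : ℕ} (v : Fin h → ℕ+) (d : (i : Fin h) → Fin (shiftBound v i))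
    (y : Fin h) :
    polyRow (hcdOfShifts v d) y = Finset.Icc (leftEnd d y) (leftEnd d y + (v y : ℕ) - 1) := by
  ext x
  rw [mem_polyRow, mem_hcdOfShifts, Finset.mem_Icc]
  omega

/-- Reachability propagates East along a row. -/
lemma reach_row {h : ℕ} (v : Fin h → ℕ+) (d : (i : Fin h) → Fin (shiftBound v i)) (y : Fin h)
    (hy : Relation.ReflTransGen (PolyStep (hcdOfShifts v d)) (0, 0) (leftEnd d y, (y : ℕ)))
    (k : ℕ) (hk : k < v y) :
    Relation.ReflTransGen (PolyStep (hcdOfShifts v d)) (0, 0) (leftEnd d y + k, (y : ℕ)) := by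
  induction k with
  | zero => simpa using hy
  | succ k ih =>
    refine (ih (by omega)).tail ⟨?_, ?_, Or.inl ?_⟩
    · rw [mem_hcdOfShifts]; omega
    · rw [mem_hcdOfShifts]; push_cast; omega
    · simp [add_assoc]

/-- The leftmost cell of each row is entered from the row below, since the shift `d y` is smaller
than the size of row `y`. -/
lemma reach_leftEnd {h : ℕ} (v : Fin h → ℕ+) (d : (i : Fin h) → Fin (shiftBound v i)) (y : ℕ)
    (hy : y < h) :
    Relation.ReflTransGen (PolyStep (hcdOfShifts v d)) (0, 0) (leftEnd d y, y) := by
  induction y with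
  | zero => rw [leftEnd_zero]
  | succ y ih =>
    have hd : (d ⟨y, by omega⟩ : ℕ) < v ⟨y, by omega⟩ := by
      have := (d ⟨y, by omega⟩).2
      simpa [shiftBound, hy] using this
    have hs := leftEnd_succ d ⟨y, by omega⟩
    simp only at hs
    have hr := reach_row v d ⟨y, by omega⟩ (ih (by omega)) _ hd
    rw [← hs] at hr
    refine hr.tail ⟨?_, ?_, Or.inr rfl⟩
    · rw [mem_hcdOfShifts, hs]; dsimp only; omega
    · have := (v ⟨y + 1, hy⟩).pos
      exact (mem_hcdOfShifts v d ⟨y + 1, hy⟩ _).2 ⟨le_rfl, by dsimp only; omega⟩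

lemma isHCD_hcdOfShifts {h : ℕ} (hh : 1 ≤ h) (v : Fin h → ℕ+)
    (d : (i : Fin h) → Fin (shiftBound v i)) : IsHCDPolyomino h v (hcdOfShifts v d) := by
  refine ⟨fun y => ⟨?_, fun hy => ?_⟩, fun y hy => ?_, fun y => ?_, ?_, ?_⟩
  · rintro ⟨x, hx⟩
    exact lt_of_mem_hcdOfShifts v d (mem_polyRow.1 hx)
  · have := polyRow_hcdOfShifts v d ⟨y, hy⟩
    have hp := (v ⟨y, hy⟩).pos
    simp only at this
    rw [this, Finset.nonempty_Icc]
    omega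
  · have hp := (v ⟨y, hy⟩).pos
    exact ⟨_, _, by omega, polyRow_hcdOfShifts v d ⟨y, hy⟩⟩
  · rw [polyRow_hcdOfShifts, Int.card_Icc]
    omega
  · have hp := (v ⟨0, hh⟩).pos
    have := leftEnd_zero d
    exact (mem_hcdOfShifts v d ⟨0, hh⟩ 0).2 ⟨by simp [this], by simp [this]⟩
  · rintro ⟨x, y⟩ hc
    have hy : y < h := lt_of_mem_hcdOfShifts v d hc
    obtain ⟨h1, h2⟩ := (mem_hcdOfShifts v d ⟨y, hy⟩ x).1 hc
    have := reach_row v d ⟨y, hy⟩ (reach_leftEnd v d y hy) (x - leftEnd d y).toNat (by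
      dsimp only at *; omega)
    have hx : leftEnd d y + ((x - leftEnd d y).toNat : ℤ) = x := by dsimp only at *; omega
    simpa only [hx] using this

lemma hcdOfShifts_injective {h : ℕ} (v : Fin h → ℕ+) : Function.Injective (hcdOfShifts v) := by
  intro d d' hdd
  have hL : ∀ y : Fin h, leftEnd d y = leftEnd d' y := by
    intro y
    have hp := (v y).pos
    have h1 := (mem_hcdOfShifts v d y (leftEnd d y)).2 (by omega)
    have h2 := (mem_hcdOfShifts v d' y (leftEnd d' y)).2 (by omega)
    rw [hdd, mem_hcdOfShifts] at h1
    rw [← hdd, mem_hcdOfShifts] at h2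
    omega
  funext i
  apply Fin.ext
  by_cases hi : (i : ℕ) + 1 < h
  · have h0 := hL i
    have h1 := hL ⟨i + 1, hi⟩
    simp only [leftEnd_succ] at h1
    omega
  · -- The shift of the top row is a dummy with a single value.
    have h1 := (d i).2
    have h2 := (d' i).2
    simp only [shiftBound, hi, if_false] at h1 h2
    omega

/-- The last step into the leftmost cell of a row is a North step, unless that cell is the origin. -/
lemma leftmost_cell {P : Finset (ℤ × ℕ)} {x : ℤ} {y : ℕ}
    (hr : Relation.ReflTransGen (PolyStep P) (0, 0) (x, y)) (hx : (x - 1, y) ∉ P) :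
    (x = 0 ∧ y = 0) ∨ ∃ z, y = z + 1 ∧ (x, z) ∈ P := by
  rcases Relation.ReflTransGen.cases_tail hr with heq | ⟨⟨p, q⟩, -, hp, -, hs | hs⟩
  · left
    simpa using heq
  · simp only [Prod.mk.injEq] at hs
    obtain ⟨rfl, rfl⟩ := hs
    simp [hp] at hx
  · simp only [Prod.mk.injEq] at hs
    obtain ⟨rfl, rfl⟩ := hs
    exact Or.inr ⟨q, rfl, hp⟩

lemma exists_shifts {h : ℕ} (v : Fin h → ℕ+) (P : Finset (ℤ × ℕ))
    (hP : IsHCDPolyomino h v P) : ∃ d, hcdOfShifts v d = P := by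
  obtain ⟨hne, hint, hcard, -, hreach⟩ := hP
  choose a b hab hrow using hint
  have hmem : ∀ (y : ℕ) (hy : y < h) (x : ℤ),
      (x, y) ∈ P ↔ a y hy ≤ x ∧ x < a y hy + (v ⟨y, hy⟩ : ℕ) := by
    intro y hy x
    have hc := hcard ⟨y, hy⟩
    simp only [hrow y hy, Int.card_Icc] at hc
    have := hab y hy
    rw [← mem_polyRow, hrow y hy, Finset.mem_Icc]
    omega
  have hleft : ∀ (y : ℕ) (hy : y < h),
      (a y hy = 0 ∧ y = 0) ∨ ∃ z, y = z + 1 ∧ (a y hy, z) ∈ P := by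
    intro y hy
    have hp := (v ⟨y, hy⟩).pos
    refine leftmost_cell (hreach _ ((hmem y hy _).2 ⟨le_rfl, by omega⟩)) ?_
    rw [hmem y hy]
    omega
  have hshift : ∀ (y : ℕ) (hy : y + 1 < h), a y (by omega) ≤ a (y + 1) hy ∧
      a (y + 1) hy < a y (by omega) + (v ⟨y, by omega⟩ : ℕ) := by
    intro y hy
    rcases hleft (y + 1) hy with h0 | ⟨z, hz, hm⟩
    · omega
    · obtain rfl : y = z := by omega
      exact (hmem y (by omega) _).1 hm
  let d : (i : Fin h) → Fin (shiftBound v i) := fun i =>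
    if hi : (i : ℕ) + 1 < h then
      ⟨(a (i + 1) hi - a i i.2).toNat, by
        have := hshift i hi
        simp only [shiftBound, hi, if_true]
        simp only [Fin.eta] at this
        omega⟩
    else ⟨0, by simp [shiftBound, hi]⟩
  have hd : ∀ (y : ℕ) (hy : y < h), leftEnd d y = a y hy := by
    intro y
    induction y with
    | zero =>
      intro hy
      rw [leftEnd_zero]
      rcases hleft 0 hy with h0 | ⟨z, hz, -⟩
      · exact h0.1.symm
      · omega
    | succ y ih =>
      intro hy
      have h1 := leftEnd_succ d ⟨y, by omega⟩
      have h2 : (d ⟨y, by omega⟩ : ℕ) = (a (y + 1) hy - a y (by omega)).toNat := by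
        simp [d, hy]
      have h3 := hshift y hy
      simp only [h2, ih (by omega)] at h1
      omega
  refine ⟨d, Finset.ext ?_⟩
  rintro ⟨x, y⟩
  by_cases hy : y < h
  · rw [hmem y hy, ← hd y hy]
    exact mem_hcdOfShifts v d ⟨y, hy⟩ x
  · refine iff_of_false (fun hm => hy (lt_of_mem_hcdOfShifts v d hm)) fun hm => hy ?_
    exact (hne y).1 ⟨x, mem_polyRow.2 hm⟩

theorem card_hcd_polyominoes (h : ℕ) (hh : 1 ≤ h) (v : Fin h → ℕ+) :
    Nat.card {P : Finset (ℤ × ℕ) // IsHCDPolyomino h v P} =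
      ∏ i : Fin h, if (i : ℕ) + 1 < h then (v i : ℕ) else 1 := by
  let F : ((i : Fin h) → Fin (shiftBound v i)) → {P : Finset (ℤ × ℕ) // IsHCDPolyomino h v P} :=
    fun d => ⟨hcdOfShifts v d, isHCD_hcdOfShifts hh v d⟩
  have hF : Function.Bijective F := by
    constructor
    · intro d d' hdd
      exact hcdOfShifts_injective v (congrArg Subtype.val hdd)
    · rintro ⟨P, hP⟩
      obtain ⟨d, hd⟩ := exists_shifts v P hP
      exact ⟨d, Subtype.ext hd⟩
  rw [← Nat.card_eq_of_bijective F hF, Nat.card_pi]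
  simp [shiftBound]
end
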